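/- Let M ∈ ℕ, σ_1, …, σ_M ∈ {+1, −1}, and let S be the symmetric tridiagonal M×M matrix with S_{jj} = −σ_j(σ_{j−1} + σ_{j+1}) (with σ_0 = σ_{M+1} = 0) and S_{j,j±1} = 1. Let n_0 be the number of negative elements in the sequence {σ_j σ_{j+1}}_{j=1}^{M−1}. Then S has exactly n_0 positive eigenvalues, M − 1 − n_0 negative eigenvalues, and a simple zero eigenvalue, counting multiplicities. -/

import Mathlib

/-- The symmetric tridiagonal matrix `S` with diagonal entries
`S_{jj} = -σ_j (σ_{j-1} + σ_{j+1})` and off-diagonal entries `1`,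
where the sites are indexed by `j = 1, …, M`. -/
def breatherMatrix (M : ℕ) (σ : ℕ → ℝ) : Matrix (Fin M) (Fin M) ℝ :=
  Matrix.of fun j k =>
    if (j : ℕ) = (k : ℕ) then -σ (j + 1) * (σ j + σ (j + 2))
    else if (j : ℕ) + 1 = (k : ℕ) ∨ (k : ℕ) + 1 = (j : ℕ) then 1
    else 0

/-! Write `s_k = σ_k σ_{k+1} = ±1` for the sign of the bond between the sites `k` and `k + 1`.
Since `s_k² = 1`, the quadratic form of `S` is a sum of one signed square per bond,
`xᵀ S x = ∑_k -s_k (x_k - s_k x_{k+1})²`, that is, `S = Bᵀ diag(-s) B` with `B` bidiagonal of size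
`(M - 1) × M`. As `B` has full row rank, Sylvester's law of inertia says that `S` has as many
positive (negative) eigenvalues as `-s` has positive (negative) entries; these are `M - 1` in all,
which leaves a simple zero eigenvalue. In the law of inertia, the bound `≤` on each count holds
for every `B`, and equality of ranks turns both bounds into equalities. -/

open Matrix Finset

section Inertia

variable {𝕜 m n : Type*} [RCLike 𝕜] [Fintype m] [Fintype n]

theorem rank_conjTranspose_mul_mul_of_linearIndependent_row {B : Matrix m n 𝕜}
    (hB : LinearIndependent 𝕜 B.row) (D : Matrix m m 𝕜) : (Bᴴ * D * B).rank = D.rank := by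
  classical
  have hunit : IsUnit (B * Bᴴ).det := by
    open scoped ComplexOrder in
    rw [← isUnit_iff_isUnit_det]
    exact (PosDef.mul_conjTranspose_self B (vecMul_injective_iff.2 hB)).isUnit
  refine le_antisymm ((rank_mul_le_left _ _).trans (rank_mul_le_right _ _)) ?_
  calc D.rank = (B * Bᴴ * (D * (B * Bᴴ))).rank := by
        rw [rank_mul_eq_right_of_isUnit_det _ _ hunit, rank_mul_eq_left_of_isUnit_det _ _ hunit]
    _ = (B * (Bᴴ * D * B * Bᴴ)).rank := by simp only [Matrix.mul_assoc]
    _ ≤ (Bᴴ * D * B).rank := (rank_mul_le_right _ _).trans (rank_mul_le_left _ _)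

theorem exists_conjTranspose_mul_mul_eq_diagonal_eigenvalues [DecidableEq n]
    {B : Matrix m n 𝕜} {D : Matrix m m 𝕜} (hA : (Bᴴ * D * B).IsHermitian) :
    ∃ C : Matrix m n 𝕜, Cᴴ * D * C = diagonal (fun i => (hA.eigenvalues i : 𝕜)) := by
  let U : Matrix n n 𝕜 := hA.eigenvectorUnitary
  refine ⟨B * U, ?_⟩
  calc (B * U)ᴴ * D * (B * U) = star U * (Bᴴ * D * B) * U := by
        rw [conjTranspose_mul, star_eq_conjTranspose]
        simp only [Matrix.mul_assoc]
    _ = diagonal (fun i => (hA.eigenvalues i : 𝕜)) :=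
        (Unitary.conjStarAlgAut_star_apply (S := 𝕜) _ _).symm.trans
          hA.conjStarAlgAut_star_eigenvectorUnitary

variable [DecidableEq m]

theorem star_dotProduct_conjTranspose_mul_diagonal_mul_mulVec
    (C : Matrix m n 𝕜) (d : m → ℝ) (x : n → 𝕜) :
    star x ⬝ᵥ (Cᴴ * diagonal (fun k => (d k : 𝕜)) * C) *ᵥ x =
      ((∑ k, d k * ‖(C *ᵥ x) k‖ ^ 2 : ℝ) : 𝕜) := by
  rw [← mulVec_mulVec, ← mulVec_mulVec, dotProduct_mulVec, ← star_mulVec]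
  push_cast
  refine sum_congr rfl fun k _ => ?_
  rw [mulVec_diagonal, Pi.star_apply, ← RCLike.conj_mul, RCLike.star_def]
  ring

variable [DecidableEq n]

theorem sum_mul_norm_sq_eq_of_conjTranspose_mul_diagonal_mul_eq
    {C : Matrix m n 𝕜} {d : m → ℝ} {a : n → ℝ}
    (h : Cᴴ * diagonal (fun k => (d k : 𝕜)) * C = diagonal (fun i => (a i : 𝕜))) (x : n → 𝕜) :
    ∑ k, d k * ‖(C *ᵥ x) k‖ ^ 2 = ∑ i, a i * ‖x i‖ ^ 2 := by
  have hC := star_dotProduct_conjTranspose_mul_diagonal_mul_mulVec C d x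
  have hone := star_dotProduct_conjTranspose_mul_diagonal_mul_mulVec (1 : Matrix n n 𝕜) a x
  rw [conjTranspose_one, Matrix.one_mul, Matrix.mul_one, one_mulVec, ← h, hC] at hone
  exact RCLike.ofReal_injective hone

/-- The rows of `C` with `0 < d k`, restricted to vectors supported where `0 < a i`, have trivial
kernel: there the form is nonpositive through `d` but positive definite through `a`. -/
theorem card_pos_le_of_conjTranspose_mul_diagonal_mul_eq
    {C : Matrix m n 𝕜} {d : m → ℝ} {a : n → ℝ}
    (h : Cᴴ * diagonal (fun k => (d k : 𝕜)) * C = diagonal (fun i => (a i : 𝕜))) :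
    #{i | 0 < a i} ≤ #{k | 0 < d k} := by
  let f : ({i // 0 < a i} → 𝕜) →ₗ[𝕜] ({k // 0 < d k} → 𝕜) :=
    LinearMap.funLeft 𝕜 𝕜 Subtype.val ∘ₗ C.mulVecLin ∘ₗ
      Function.ExtendByZero.linearMap 𝕜 Subtype.val
  suffices hf : Function.Injective f by
    simpa [Fintype.card_subtype] using LinearMap.finrank_le_finrank_of_injective hf
  refine (injective_iff_map_eq_zero _).2 fun c hc => ?_
  let x : n → 𝕜 := Function.extend Subtype.val c 0
  have hx_coe (i : {i // 0 < a i}) : x i = c i := Subtype.val_injective.extend_apply ..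
  have hx_zero {i : n} (hi : ¬ 0 < a i) : x i = 0 :=
    Function.extend_apply' _ _ _ fun ⟨j, hj⟩ => hi (hj ▸ j.2)
  have hCx {k : m} (hk : 0 < d k) : (C *ᵥ x) k = 0 := congrFun hc ⟨k, hk⟩
  have hnonneg (i : n) : 0 ≤ a i * ‖x i‖ ^ 2 := by
    by_cases hi : 0 < a i
    · positivity
    · simp [hx_zero hi]
  have hsum : ∑ i, a i * ‖x i‖ ^ 2 = 0 := by
    refine le_antisymm ?_ (sum_nonneg fun i _ => hnonneg i)
    rw [← sum_mul_norm_sq_eq_of_conjTranspose_mul_diagonal_mul_eq h]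
    refine sum_nonpos fun k _ => ?_
    by_cases hk : 0 < d k
    · simp [hCx hk]
    · exact mul_nonpos_of_nonpos_of_nonneg (not_lt.1 hk) (sq_nonneg _)
  ext i
  have hi := (sum_eq_zero_iff_of_nonneg fun i _ => hnonneg i).1 hsum i (mem_univ _)
  simpa [hx_coe, i.2.ne'] using hi

theorem card_neg_le_of_conjTranspose_mul_diagonal_mul_eq
    {C : Matrix m n 𝕜} {d : m → ℝ} {a : n → ℝ}
    (h : Cᴴ * diagonal (fun k => (d k : 𝕜)) * C = diagonal (fun i => (a i : 𝕜))) :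
    #{i | a i < 0} ≤ #{k | d k < 0} := by
  have hneg : Cᴴ * diagonal (fun k => ((-d k : ℝ) : 𝕜)) * C =
      diagonal (fun i => ((-a i : ℝ) : 𝕜)) := by
    simp only [RCLike.ofReal_neg, ← diagonal_neg, Matrix.mul_neg, Matrix.neg_mul, h]
  simpa using card_pos_le_of_conjTranspose_mul_diagonal_mul_eq hneg

theorem card_pos_add_card_neg_eq_card_ne_zero {ι R : Type*} [Fintype ι] [LinearOrder R] [Zero R]
    (f : ι → R) : #{i | 0 < f i} + #{i | f i < 0} = #{i | f i ≠ 0} := by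
  classical
  rw [← card_union_of_disjoint, ← filter_or]
  · simp only [ne_iff_lt_or_gt, or_comm]
  · exact disjoint_filter.2 fun i _ h => h.not_gt

theorem sylvester_law_of_inertia_eigenvalues {B : Matrix m n 𝕜} {d : m → ℝ}
    (hB : LinearIndependent 𝕜 B.row)
    (hA : (Bᴴ * diagonal (fun k => (d k : 𝕜)) * B).IsHermitian) :
    #{i | 0 < hA.eigenvalues i} = #{k | 0 < d k} ∧
    #{i | hA.eigenvalues i < 0} = #{k | d k < 0} ∧
    #{i | hA.eigenvalues i = 0} + #{k | d k ≠ 0} = Fintype.card n := by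
  obtain ⟨C, hC⟩ := exists_conjTranspose_mul_mul_eq_diagonal_eigenvalues hA
  have hpos := card_pos_le_of_conjTranspose_mul_diagonal_mul_eq hC
  have hneg := card_neg_le_of_conjTranspose_mul_diagonal_mul_eq hC
  have hrank : #{i | hA.eigenvalues i ≠ 0} = #{k | d k ≠ 0} := by
    rw [← Fintype.card_subtype, ← hA.rank_eq_card_non_zero_eigs,
      rank_conjTranspose_mul_mul_of_linearIndependent_row hB, rank_diagonal, Fintype.card_subtype]
    simp
  have hd := card_pos_add_card_neg_eq_card_ne_zero d
  have heig := card_pos_add_card_neg_eq_card_ne_zero hA.eigenvalues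
  have hsplit : #{i | hA.eigenvalues i = 0} + #{i | hA.eigenvalues i ≠ 0} = Fintype.card n :=
    card_filter_add_card_filter_not _
  omega

end Inertia

theorem card_filter_roots_charpoly {n : Type*} [Fintype n] [DecidableEq n] {A : Matrix n n ℝ}
    (hA : A.IsHermitian) (p : ℝ → Prop) [DecidablePred p] :
    (A.charpoly.roots.filter p).card = #{i | p (hA.eigenvalues i)} := by
  rw [hA.roots_charpoly_eq_eigenvalues, Multiset.filter_map, Multiset.card_map]
  rfl

theorem sylvester_law_of_inertia_roots_charpoly {m n : Type*} [Fintype m] [Fintype n]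
    [DecidableEq m] [DecidableEq n] {B : Matrix m n ℝ} (hB : LinearIndependent ℝ B.row)
    (d : m → ℝ) :
    ((Bᵀ * diagonal d * B).charpoly.roots.filter (0 < ·)).card = #{k | 0 < d k} ∧
    ((Bᵀ * diagonal d * B).charpoly.roots.filter (· < 0)).card = #{k | d k < 0} ∧
    (Bᵀ * diagonal d * B).charpoly.roots.count 0 = Fintype.card n - #{k | d k ≠ 0} := by
  rw [← conjTranspose_eq_transpose_of_trivial]
  have hA : (Bᴴ * diagonal d * B).IsHermitian :=
    isHermitian_conjTranspose_mul_mul B (isHermitian_diagonal d)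
  obtain ⟨hpos, hneg, hzero⟩ := sylvester_law_of_inertia_eigenvalues (𝕜 := ℝ) hB hA
  refine ⟨?_, ?_, ?_⟩
  · rw [card_filter_roots_charpoly hA, hpos]
  · rw [card_filter_roots_charpoly hA, hneg]
  · rw [← Multiset.card_replicate (Multiset.count _ _), ← Multiset.filter_eq',
      card_filter_roots_charpoly hA]
    exact Nat.eq_sub_of_add_eq hzero

section Bonds

variable {m : ℕ}

/-- The matrix of the map `x ↦ (x_k - s_k x_{k+1})_k`, with one row for each bond `k` between
consecutive sites `k` and `k + 1`. -/
def bondMatrix {R : Type*} [Ring R] (s : Fin m → R) : Matrix (Fin m) (Fin (m + 1)) R :=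
  of fun k j => if j = k.castSucc then 1 else if j = k.succ then -s k else 0

theorem linearIndependent_row_bondMatrix {R : Type*} [CommRing R] [IsDomain R] (s : Fin m → R) :
    LinearIndependent R (bondMatrix s).row := by
  let T := (bondMatrix s).submatrix id Fin.castSucc
  have hT : T.BlockTriangular id := fun k j hjk => by
    have hj_ne : j ≠ k := hjk.ne
    have hj_ne_succ : j.castSucc ≠ k.succ := (Fin.castSucc_lt_succ_iff.2 hjk.le).ne
    simp [T, bondMatrix, hj_ne, hj_ne_succ]
  have hdet : T.det = 1 := by
    rw [det_of_isUpperTriangular hT]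
    simp [T, bondMatrix]
  exact (linearIndependent_rows_of_det_ne_zero (hdet ▸ one_ne_zero)).of_comp
    (LinearMap.funLeft R R Fin.castSucc)

/-- The product `σ_j σ_{j+1}` of the signs at the two ends of a bond. The bond `k : Fin m` joins the
sites `j = k + 1` and `k + 2`, because sites are numbered from `1`. -/
def bondSign (m : ℕ) (σ : ℕ → ℝ) (k : Fin m) : ℝ := σ (k + 1) * σ (k + 2)

theorem bondSign_eq_one_or_neg_one {σ : ℕ → ℝ}
    (hσ : ∀ j, 1 ≤ j → j ≤ m + 1 → σ j = 1 ∨ σ j = -1) (k : Fin m) :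
    bondSign m σ k = 1 ∨ bondSign m σ k = -1 := by
  rcases hσ (k + 1) (by lia) (by lia) with h | h <;>
    rcases hσ (k + 2) (by lia) (by lia) with h' | h' <;> simp [bondSign, h, h']

theorem sum_ite_eq_castSucc_add_ite_eq_succ {R : Type*} [AddCommMonoid R]
    (i : Fin (m + 1)) {a b : R} (ha : i = Fin.last m → a = 0) (hb : i = 0 → b = 0) :
    ∑ k : Fin m, ((if i = k.castSucc then a else 0) + if i = k.succ then b else 0) = a + b := by
  rw [sum_add_distrib]
  congr 1
  · cases i using Fin.lastCases with
    | last => simp [ha]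
    | cast i => simp
  · cases i using Fin.cases with
    | zero => simp [hb]
    | succ i => simp

theorem breatherMatrix_succ_eq_transpose_mul_diagonal_mul {σ : ℕ → ℝ}
    (hfirst : σ 0 = 0) (hlast : σ (m + 2) = 0)
    (hsign : ∀ k : Fin m, bondSign m σ k = 1 ∨ bondSign m σ k = -1) :
    breatherMatrix (m + 1) σ =
      (bondMatrix (bondSign m σ))ᵀ * diagonal (-bondSign m σ) * bondMatrix (bondSign m σ) := by
  ext i j
  -- The contributions to the entry of the bonds to the right and to the left of the site `i`.
  let right : ℝ := if j = i then -(σ (i + 1) * σ (i + 2)) else if (i : ℕ) + 1 = j then 1 else 0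
  let left : ℝ := if j = i then -(σ i * σ (i + 1)) else if (j : ℕ) + 1 = i then 1 else 0
  have hright : i = Fin.last m → right = 0 := by grind
  have hleft : i = 0 → left = 0 := by grind
  symm
  calc
    _ = ∑ k : Fin m, ((if i = k.castSucc then right else 0) + if i = k.succ then left else 0) := by
        rw [mul_apply]
        refine sum_congr rfl fun k _ => ?_
        have hk := hsign k
        simp only [mul_diagonal, Pi.neg_apply, transpose_apply, bondMatrix, of_apply]
        grind [bondSign]
    _ = right + left := sum_ite_eq_castSucc_add_ite_eq_succ i hright hleft
    _ = breatherMatrix (m + 1) σ i j := by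
        simp only [breatherMatrix, of_apply]
        grind

theorem card_filter_Icc_one (p : ℕ → Prop) [DecidablePred p] :
    #{j ∈ Icc 1 m | p j} = #{k : Fin m | p (k + 1)} := by
  simp only [card_filter]
  rw [Fin.sum_univ_eq_sum_range (fun k => if p (k + 1) then 1 else 0), range_eq_Ico,
    sum_Ico_add' (fun j => if p j then 1 else 0), zero_add, Ico_add_one_right_eq_Icc]

theorem card_filter_neg_bondSign_pos {σ : ℕ → ℝ}
    (hsign : ∀ k, bondSign m σ k = 1 ∨ bondSign m σ k = -1) :
    #{k | 0 < (-bondSign m σ) k} = #{j ∈ Icc 1 m | σ j * σ (j + 1) = -1} := by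
  rw [card_filter_Icc_one]
  refine congrArg card (filter_congr fun k _ => ?_)
  change 0 < -bondSign m σ k ↔ bondSign m σ k = -1
  rcases hsign k with h | h <;> norm_num [h]

theorem card_filter_neg_bondSign_ne_zero {σ : ℕ → ℝ}
    (hsign : ∀ k, bondSign m σ k = 1 ∨ bondSign m σ k = -1) :
    #{k | (-bondSign m σ) k ≠ 0} = m := by
  have hne (k : Fin m) : (-bondSign m σ) k ≠ 0 := by rcases hsign k with h | h <;> simp [h]
  rw [filter_true_of_mem fun k _ => hne k, card_univ, Fintype.card_fin]

end Bonds

/-- with `n₀` the number of negative elements of the sequence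
`{σ_j σ_{j+1}}_{j=1}^{M-1}`, the matrix `S` has exactly `n₀` positive
eigenvalues, `M - 1 - n₀` negative eigenvalues, and a simple zero eigenvalue,
counting algebraic multiplicities (roots of the characteristic polynomial). -/
theorem stmt4
    (M : ℕ) (hM : 1 ≤ M) (σ : ℕ → ℝ)
    (hσ : ∀ j, 1 ≤ j → j ≤ M → σ j = 1 ∨ σ j = -1)
    (hσ0 : σ 0 = 0) (hσM : σ (M + 1) = 0)
    (n₀ : ℕ)
    (hn₀ : n₀ = ((Finset.Icc 1 (M - 1)).filter (fun j => σ j * σ (j + 1) = -1)).card) :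
    (((breatherMatrix M σ).charpoly.roots.filter (fun γ => 0 < γ)).card = n₀) ∧
    (((breatherMatrix M σ).charpoly.roots.filter (fun γ => γ < 0)).card = M - 1 - n₀) ∧
    ((breatherMatrix M σ).charpoly.roots.count 0 = 1) := by
  obtain ⟨m, rfl⟩ := Nat.exists_eq_add_of_le' hM
  have hsign := bondSign_eq_one_or_neg_one hσ
  obtain ⟨hpos, hneg, hzero⟩ := sylvester_law_of_inertia_roots_charpoly
    (linearIndependent_row_bondMatrix (bondSign m σ)) (-bondSign m σ)
  have hcard_pos := card_filter_neg_bondSign_pos hsign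
  have hcard_ne := card_filter_neg_bondSign_ne_zero hsign
  have hcard_add := card_pos_add_card_neg_eq_card_ne_zero (-bondSign m σ)
  rw [breatherMatrix_succ_eq_transpose_mul_diagonal_mul hσ0 hσM hsign, hpos, hneg, hzero,
    Fintype.card_fin]
  rw [Nat.add_sub_cancel] at hn₀
  omega
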